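/- Let R be a commutative ring and M an R-module. For each prime p let a_p, b_p, c_p ∈ R. Let x : ℤ_{>0} → M satisfy, for every prime p and every N ≥ 1: x(pN) = a_p·x(N) − c_p·x(N) if p ∤ N, and x(pN) = a_p·x(N) − b_p·x(N/p) if p | N. For each prime p define d_p : ℕ → R by d_p(0) = 1, d_p(1) = a_p, d_p(δ+1) = a_p·d_p(δ) − b_p·d_p(δ−1), set D_p(0) = 1 and D_p(δ) = d_p(δ) − c_p·d_p(δ−1) for δ ≥ 1, and define D(N) := Π_p D_p(ord_p N), where ord_p N is the exponent of p in N. Then x(N) = D(N)·x(1) for every N ≥ 1. -/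

import Mathlib

/-- The Hecke-type polynomial sequence: `dSeq a b 0 = 1`, `dSeq a b 1 = a`,
`dSeq a b (δ+1) = a * dSeq a b δ - b * dSeq a b (δ-1)`. -/
def dSeq {R : Type*} [CommRing R] (a b : R) : ℕ → R
  | 0 => 1
  | 1 => a
  | (n + 2) => a * dSeq a b (n + 1) - b * dSeq a b n

/-- `DSeq a b c 0 = 1` and `DSeq a b c δ = dSeq a b δ - c * dSeq a b (δ-1)` for `δ ≥ 1`. -/
def DSeq {R : Type*} [CommRing R] (a b c : R) : ℕ → R
  | 0 => 1
  | (n + 1) => dSeq a b (n + 1) - c * dSeq a b n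

/-!
Fix a prime `p` and an `N` prime to `p`. Along `N, p N, p² N, …` the hypothesis is a two-term linear
recurrence, which `DSeq` also satisfies, so `x (p ^ k * N) = D_p k • x N`. Stripping the prime
powers off `N` one at a time then leaves the product of the `D_p` acting on `x 1`.
-/

section Recurrence

variable {R : Type*} [CommRing R]

theorem DSeq_one (a b c : R) : DSeq a b c 1 = a - c := by
  simp [DSeq, dSeq]

theorem DSeq_add_two (a b c : R) (k : ℕ) :
    DSeq a b c (k + 2) = a * DSeq a b c (k + 1) - b * DSeq a b c k := by
  cases k <;> simp only [DSeq, dSeq] <;> ring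

variable {M : Type*} [AddCommGroup M] [Module R M] {a b c : R}

theorem eq_DSeq_smul_of_recurrence {u : ℕ → M} (h_one : u 1 = a • u 0 - c • u 0)
    (h_add_two : ∀ k, u (k + 2) = a • u (k + 1) - b • u k) (k : ℕ) :
    u k = DSeq a b c k • u 0 := by
  induction k using Nat.twoStepInduction with
  | zero => rw [DSeq, one_smul]
  | one => rw [h_one, DSeq_one, sub_smul]
  | more k ih₀ ih₁ => rw [h_add_two, ih₀, ih₁, DSeq_add_two, sub_smul, mul_smul, mul_smul]

theorem apply_pow_mul_eq_DSeq_smul {x : ℕ → M} {p N : ℕ} (hp : 0 < p) (hN : 0 < N)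
    (h_mul : x (p * N) = a • x N - c • x N)
    (h_dvd : ∀ n, 1 ≤ n → p ∣ n → x (p * n) = a • x n - b • x (n / p)) (k : ℕ) :
    x (p ^ k * N) = DSeq a b c k • x N := by
  have h_add_two (k : ℕ) :
      x (p ^ (k + 2) * N) = a • x (p ^ (k + 1) * N) - b • x (p ^ k * N) := by
    have h_succ (j : ℕ) : p ^ (j + 1) * N = p * (p ^ j * N) := by ring
    rw [h_succ (k + 1), h_dvd _ (Nat.mul_pos (pow_pos hp _) hN) ⟨_, h_succ k⟩, h_succ k,
      Nat.mul_div_cancel_left _ hp]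
  simpa using eq_DSeq_smul_of_recurrence (u := fun k ↦ x (p ^ k * N)) (by simpa using h_mul)
    h_add_two k

end Recurrence

section Factorization

variable {R : Type*} [CommMonoid R]

theorem factorization_prod_mul_of_coprime (f : ℕ → ℕ → R) {m n : ℕ} (h : m.Coprime n) :
    (m * n).factorization.prod f = m.factorization.prod f * n.factorization.prod f := by
  rw [Nat.factorization_mul_of_coprime h]
  exact Finsupp.prod_add_index_of_disjoint h.disjoint_primeFactors f

theorem factorization_prod_prime_pow (f : ℕ → ℕ → R) {p k : ℕ} (hp : p.Prime) (hk : k ≠ 0) :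
    (p ^ k).factorization.prod f = f p k := by
  rw [hp.factorization_pow, Finsupp.prod, Finsupp.support_single p hk,
    Finset.prod_singleton, Finsupp.single_eq_same]

theorem apply_eq_factorization_prod_smul {M : Type*} [MulAction R M] {f : ℕ → ℕ → R} {x : ℕ → M}
    (h : ∀ p k N, p.Prime → k ≠ 0 → ¬ p ∣ N → x (p ^ k * N) = f p k • x N) {N : ℕ} (hN : N ≠ 0) :
    x N = N.factorization.prod f • x 1 := by
  induction N using Nat.recOnPrimePow with
  | zero => exact absurd rfl hN
  | one => simp
  | prime_pow_mul N p k hp hpN hk ih =>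
    have h_coprime : (p ^ k).Coprime N := (hp.coprime_pow_of_not_dvd hpN).symm
    rw [h p k N hp hk.ne' hpN, ih (right_ne_zero_of_mul hN),
      factorization_prod_mul_of_coprime f h_coprime, factorization_prod_prime_pow f hp hk.ne',
      mul_smul]

end Factorization

/-- If `x : ℤ_{>0} → M` satisfies, at every prime `p` and every `N ≥ 1`,
`x (p*N) = a_p • x N - c_p • x N` when `p ∤ N`, and
`x (p*N) = a_p • x N - b_p • x (N/p)` when `p ∣ N`, then
`x N = (∏_p D_p (ord_p N)) • x 1` where `D_p = DSeq (a p) (b p) (c p)`. -/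
theorem statement5 {R : Type*} [CommRing R] {M : Type*} [AddCommGroup M] [Module R M]
    (a b c : ℕ → R) (x : ℕ → M)
    (hx : ∀ p : ℕ, p.Prime → ∀ N : ℕ, 1 ≤ N →
      (¬ p ∣ N → x (p * N) = a p • x N - c p • x N) ∧
      (p ∣ N → x (p * N) = a p • x N - b p • x (N / p))) :
    ∀ N : ℕ, 1 ≤ N →
      x N = (∏ p ∈ N.primeFactors,
        DSeq (a p) (b p) (c p) (N.factorization p)) • x 1 := by
  intro N hN
  refine apply_eq_factorization_prod_smul (fun p k n hp _ hpn ↦ ?_) (by positivity)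
  have hn : 0 < n := Nat.pos_of_ne_zero fun h ↦ hpn (h ▸ dvd_zero p)
  exact apply_pow_mul_eq_DSeq_smul hp.pos hn ((hx p hp n hn).1 hpn)
    (fun m hm ↦ (hx p hp m hm).2) k
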